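/- Let γ be the Euler–Mascheroni constant, h_σ(x) = (x²−1)/(x²+1), and h_α(x) = ((1−x²)/(1+x²))((1/2)log(1+x²) − 1 + γ) + (2x/(1+x²)) arctan x. Then ∫_ℝ h_σ(x) h_α(x) · (1/(π(1+x²))) dx = (1/2)(1 − γ − log 2) and ∫_ℝ h_α(x)² · (1/(π(1+x²))) dx = (1/2)( π²/6 + (γ + log 2 − 1)² ). -/

import Mathlib

open MeasureTheory Real

/-!
Put `x = tan θ` and `z = e^{2iθ}`. The Cauchy law in `x` becomes the uniform law on the unit circle,
and the scores become `-Re z` and `-Re (z L)` with `L = log (1 + z) + 1 - γ - log 2`, where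
`Im L = θ`. For `|z| = 1`,

* `Re z * Re (z L) = Re ((1 + z²) L) / 2`,
* `Re (z L)² = Re ((1 + z²) L²) / 2 + (Im L)²`.

The functions `(1 + z²) Lᵐ` are holomorphic in the disc with only a logarithmic singularity at the
boundary point `-1`. Moving that singularity slightly outside the disc does not increase the modulus
on the circle, so by dominated convergence they still average to their values at the centre, while
`θ²` averages to `π² / 12`.
-/

open Filter Metric Set Asymptotics
open scoped Topology

section ArctanSubstitution

variable {E : Type*} [NormedAddCommGroup E] [NormedSpace ℝ E]

theorem integrable_inv_one_add_sq_smul_comp_arctan_iff {g : ℝ → E} :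
    Integrable (fun x : ℝ ↦ (1 + x ^ 2)⁻¹ • g (arctan x)) ↔
      IntervalIntegrable g volume (-(π / 2)) (π / 2) := by
  have h := integrableOn_image_iff_integrableOn_abs_deriv_smul MeasurableSet.univ
    (fun x _ ↦ (hasDerivAt_arctan' x).hasDerivWithinAt) arctan_injective.injOn g
  rw [intervalIntegrable_iff_integrableOn_Ioo_of_le (by linarith [pi_pos]), ← range_arctan,
    ← image_univ, h, integrableOn_univ]
  simp_rw [abs_of_pos (show 0 < (1 + _ ^ 2 : ℝ)⁻¹ by positivity)]

theorem integral_inv_one_add_sq_smul_comp_arctan (g : ℝ → E) :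
    ∫ x : ℝ, (1 + x ^ 2)⁻¹ • g (arctan x) = ∫ t in -(π / 2)..π / 2, g t := by
  have h := integral_image_eq_integral_abs_deriv_smul MeasurableSet.univ
    (fun x _ ↦ (hasDerivAt_arctan' x).hasDerivWithinAt) arctan_injective.injOn g
  rw [intervalIntegral.integral_of_le (by linarith [pi_pos]), integral_Ioc_eq_integral_Ioo,
    ← range_arctan, ← image_univ, h, setIntegral_univ]
  simp_rw [abs_of_pos (show 0 < (1 + _ ^ 2 : ℝ)⁻¹ by positivity)]

theorem circleIntegrable_iff_integrable_arctan {f : ℂ → E} {c : ℂ} {R : ℝ} :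
    CircleIntegrable f c R ↔
      Integrable fun x : ℝ ↦ (1 + x ^ 2)⁻¹ • f (circleMap c R (2 * arctan x)) := by
  have hper : (fun θ ↦ f (circleMap c R θ)).Periodic (2 * π) := (periodic_circleMap c R).comp f
  rw [integrable_inv_one_add_sq_smul_comp_arctan_iff (g := fun t ↦ f (circleMap c R (2 * t))),
    ← neg_div,
    IntervalIntegrable.comp_mul_left_iff (f := fun θ ↦ f (circleMap c R θ)) two_ne_zero
      (by simp), CircleIntegrable]
  have := hper.intervalIntegrable_iff (t₁ := 0) (t₂ := -π)
  convert this using 2 <;> ring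

theorem circleAverage_eq_integral_arctan (f : ℂ → E) (c : ℂ) (R : ℝ) :
    circleAverage f c R =
      π⁻¹ • ∫ x : ℝ, (1 + x ^ 2)⁻¹ • f (circleMap c R (2 * arctan x)) := by
  rw [integral_inv_one_add_sq_smul_comp_arctan fun t ↦ f (circleMap c R (2 * t)),
    intervalIntegral.integral_comp_mul_left (fun θ ↦ f (circleMap c R θ)) two_ne_zero,
    circleAverage_eq_integral_add (-π),
    intervalIntegral.integral_comp_add_right (fun θ ↦ f (circleMap c R θ)), smul_smul, mul_inv,
    mul_comm]
  congr 2 <;> ring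

theorem integral_comp_circleMap_mul_cauchy_density (f : ℂ → ℝ) (c : ℂ) (R : ℝ) :
    ∫ x : ℝ, f (circleMap c R (2 * arctan x)) * (1 / (π * (1 + x ^ 2))) = circleAverage f c R := by
  rw [circleAverage_eq_integral_arctan, smul_eq_mul, ← integral_const_mul]
  refine integral_congr_ae (.of_forall fun x ↦ ?_)
  simp only [one_div, mul_inv, smul_eq_mul]
  ring

end ArctanSubstitution

section MeanValue

variable {V : Type*} [NormedAddCommGroup V] [InnerProductSpace ℝ V]

theorem norm_sub_le_norm_sub_add_smul {c w z : V} (hz : ‖z - c‖ ≤ ‖w - c‖) {δ : ℝ} (hδ : 0 ≤ δ) :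
    ‖z - w‖ ≤ ‖z - (w + δ • (w - c))‖ := by
  have hinner : inner ℝ (z - w) (w - c) ≤ 0 := by
    have h := real_inner_le_norm (z - c) (w - c)
    rw [← sub_sub_sub_cancel_right z w c, inner_sub_left, real_inner_self_eq_norm_sq]
    nlinarith [norm_nonneg (w - c)]
  rw [← sub_sub, ← sq_le_sq₀ (norm_nonneg _) (norm_nonneg _), norm_sub_sq_real (z - w),
    real_inner_smul_right]
  nlinarith [mul_nonneg hδ (neg_nonneg.2 hinner), sq_nonneg ‖δ • (w - c)‖]

theorem sub_add_smul_ne_zero {c w z : V} (hz : ‖z - c‖ ≤ ‖w - c‖) (hw : w ≠ c) {δ : ℝ}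
    (hδ : 0 < δ) : z - (w + δ • (w - c)) ≠ 0 := by
  intro h
  have h' := norm_sub_le_norm_sub_add_smul hz hδ.le
  rw [h, norm_zero, norm_le_zero_iff, sub_eq_zero] at h'
  subst h'
  simp [sub_eq_zero, hδ.ne', hw] at h

variable {E : Type*} [NormedAddCommGroup E] [NormedSpace ℂ E]

/-- The function `f` with a singularity at a boundary point `w` of a disc about `c` replaced by one
at `w + δ (w - c)`, outside the closed disc when `0 < δ`. -/
noncomputable def boundaryRegularization (c w : ℂ) (δ : ℝ) (f : ℂ → E) (z : ℂ) : E :=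
  (z - (w + δ • (w - c)))⁻¹ • (z - w) • f z

variable {f : ℂ → E} {c w z : ℂ}

theorem tendsto_boundaryRegularization (hz : z ≠ w) :
    Tendsto (fun δ ↦ boundaryRegularization c w δ f z) (𝓝[>] 0) (𝓝 (f z)) := by
  have hcont : ContinuousAt (fun δ ↦ boundaryRegularization c w δ f z) 0 := by
    have h0 : z - (w + (0 : ℝ) • (w - c)) ≠ 0 := by simpa [sub_eq_zero] using hz
    exact ((by fun_prop : ContinuousAt (fun δ : ℝ ↦ z - (w + δ • (w - c))) 0).inv₀ h0).smul
      continuousAt_const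
  have hzero : boundaryRegularization c w 0 f z = f z := by
    simp [boundaryRegularization, inv_smul_smul₀ (sub_ne_zero.2 hz)]
  simpa only [hzero] using hcont.tendsto.mono_left nhdsWithin_le_nhds

theorem norm_boundaryRegularization_le (hz : ‖z - c‖ ≤ ‖w - c‖) {δ : ℝ} (hδ : 0 ≤ δ) :
    ‖boundaryRegularization c w δ f z‖ ≤ ‖f z‖ := by
  rw [boundaryRegularization, smul_smul, norm_smul, norm_mul, norm_inv]
  exact mul_le_of_le_one_left (norm_nonneg _)
    (inv_mul_le_one_of_le₀ (norm_sub_le_norm_sub_add_smul hz hδ) (norm_nonneg _))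

theorem diffContOnCl_boundaryRegularization
    (hf : DiffContOnCl ℂ (fun z ↦ (z - w) • f z) (ball c ‖w - c‖)) (hw : w ≠ c) {δ : ℝ}
    (hδ : 0 < δ) : DiffContOnCl ℂ (boundaryRegularization c w δ f) (ball c ‖w - c‖) := by
  refine DiffContOnCl.smul (.inv ?_ fun z hz ↦ ?_) hf
  · exact (by fun_prop : Differentiable ℂ fun z ↦ z - (w + δ • (w - c))).diffContOnCl
  · have hz' := mem_closedBall_iff_norm.1 (closure_ball_subset_closedBall hz)
    exact sub_add_smul_ne_zero hz' hw hδ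

theorem circleAverage_of_diffContOnCl_sub_smul [CompleteSpace E] {R : ℝ} (hw : w ∈ sphere c R)
    (hf : DiffContOnCl ℂ (fun z ↦ (z - w) • f z) (ball c R)) (hfi : CircleIntegrable f c R) :
    circleAverage f c R = f c := by
  obtain rfl : ‖w - c‖ = R := mem_sphere_iff_norm.1 hw
  obtain rfl | hwc := eq_or_ne w c
  · simp
  have hR : 0 < ‖w - c‖ := norm_pos_iff.2 (sub_ne_zero.2 hwc)
  have hreg {δ : ℝ} (hδ : 0 < δ) := diffContOnCl_boundaryRegularization hf hwc hδ
  have hmean {δ : ℝ} (hδ : 0 < δ) : circleAverage (boundaryRegularization c w δ f) c ‖w - c‖ =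
      boundaryRegularization c w δ f c :=
    DiffContOnCl.circleAverage (by simpa only [abs_norm] using hreg hδ)
  have hlim : Tendsto (fun δ ↦ circleAverage (boundaryRegularization c w δ f) c ‖w - c‖) (𝓝[>] 0)
      (𝓝 (circleAverage f c ‖w - c‖)) := by
    refine (intervalIntegral.tendsto_integral_filter_of_dominated_convergence
      (fun θ ↦ ‖f (circleMap c ‖w - c‖ θ)‖) ?_ ?_ hfi.norm ?_).const_smul _
    · filter_upwards [self_mem_nhdsWithin] with δ hδ
      have hcont := (hreg hδ).continuousOn_ball.mono sphere_subset_closedBall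
      have hint : IntervalIntegrable _ volume 0 (2 * π) := hcont.circleIntegrable hR.le
      exact hint.aestronglyMeasurable_restrict_uIoc
    · filter_upwards [self_mem_nhdsWithin] with δ hδ
      refine ae_of_all _ fun θ _ ↦ norm_boundaryRegularization_le ?_ (le_of_lt hδ)
      exact mem_closedBall_iff_norm.1 (circleMap_mem_closedBall c hR.le θ)
    · have hne : ∀ᵐ θ : ℝ, circleMap c ‖w - c‖ θ ≠ w :=
        measure_eq_zero_iff_ae_notMem.1
          (((countable_singleton w).preimage_circleMap c hR.ne').measure_zero volume)
      filter_upwards [hne] with θ hθ _ using tendsto_boundaryRegularization hθ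
  refine tendsto_nhds_unique hlim
    ((tendsto_boundaryRegularization (c := c) hwc.symm).congr' ?_)
  filter_upwards [self_mem_nhdsWithin] with δ hδ using (hmean hδ).symm

end MeanValue

section LogOneAdd

theorem one_add_mem_slitPlane_of_norm_le_one {z : ℂ} (hz : ‖z‖ ≤ 1) (hz' : z ≠ -1) :
    1 + z ∈ Complex.slitPlane := by
  obtain hlt | heq := (neg_le_of_abs_le ((Complex.abs_re_le_norm z).trans hz)).lt_or_eq
  · exact .inl (by simpa using neg_lt_iff_pos_add'.1 hlt)
  · refine .inr fun him ↦ hz' (Complex.ext heq.symm ?_)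
    simpa using him

theorem one_add_circleMap_two_mul (t : ℝ) :
    1 + circleMap 0 1 (2 * t) = (2 * cos t : ℝ) * Complex.exp (t * Complex.I) := by
  have h : Complex.exp (-t * Complex.I) * Complex.exp (t * Complex.I) = 1 := by
    rw [← Complex.exp_add, neg_mul, neg_add_cancel, Complex.exp_zero]
  rw [circleMap_zero, Complex.ofReal_mul 2 (cos t), Complex.ofReal_cos, Complex.ofReal_ofNat,
    Complex.two_cos, add_mul, h, ← Complex.exp_add]
  push_cast
  ring_nf

theorem log_one_add_circleMap_two_mul {t : ℝ} (ht : t ∈ Ioo (-(π / 2)) (π / 2)) :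
    Complex.log (1 + circleMap 0 1 (2 * t)) = log (2 * cos t) + t * Complex.I := by
  have hcos := cos_pos_of_mem_Ioo ht
  have him : (t * Complex.I).im = t := by simp
  rw [one_add_circleMap_two_mul, Complex.log_ofReal_mul (by positivity) (Complex.exp_ne_zero _),
    Complex.log_exp (by linarith [ht.1, pi_pos]) (by linarith [ht.2, pi_pos])]

theorem log_one_add_circleMap_two_mul_arctan (x : ℝ) :
    Complex.log (1 + circleMap 0 1 (2 * arctan x)) =
      (log 2 - 1 / 2 * log (1 + x ^ 2) : ℝ) + arctan x * Complex.I := by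
  have hlog : log (2 * cos (arctan x)) = log 2 - 1 / 2 * log (1 + x ^ 2) := by
    rw [cos_arctan, mul_one_div, log_div two_ne_zero (by positivity), log_sqrt (by positivity)]
    ring
  rw [log_one_add_circleMap_two_mul (arctan_mem_Ioo x), hlog]

theorem circleMap_two_mul_arctan (x : ℝ) :
    circleMap 0 1 (2 * arctan x) = ⟨(1 - x ^ 2) / (1 + x ^ 2), 2 * x / (1 + x ^ 2)⟩ := by
  have hcos : cos (2 * arctan x) = (1 - x ^ 2) / (1 + x ^ 2) := by
    rw [cos_two_mul', cos_sq_arctan, sin_sq_arctan, sub_div]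
  have hsin : sin (2 * arctan x) = 2 * x / (1 + x ^ 2) := by
    rw [sin_two_mul, sin_arctan, cos_arctan, mul_assoc, div_mul_div_comm,
      mul_self_sqrt (by positivity), mul_one, mul_div_assoc]
  rw [circleMap_zero, Complex.ofReal_one, one_mul, ← hcos, ← hsin]
  exact Complex.ext (Complex.exp_ofReal_mul_I_re _) (Complex.exp_ofReal_mul_I_im _)

end LogOneAdd

section LogGrowth

theorem tendsto_one_add_sq_cocompact :
    Tendsto (fun x : ℝ ↦ 1 + x ^ 2) (cocompact ℝ) atTop := by
  have h : Tendsto (fun x : ℝ ↦ ‖x‖ ^ 2) (cocompact ℝ) atTop :=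
    (tendsto_pow_atTop two_ne_zero).comp tendsto_norm_cocompact_atTop
  simpa only [norm_eq_abs, sq_abs] using tendsto_atTop_add_const_left _ 1 h

theorem integrable_inv_one_add_sq_smul_of_isBigO {E : Type*} [NormedAddCommGroup E]
    [NormedSpace ℝ E] {f : ℝ → E} {m : ℕ} (hf : Continuous f)
    (hO : f =O[cocompact ℝ] fun x ↦ log (1 + x ^ 2) ^ m) :
    Integrable fun x : ℝ ↦ (1 + x ^ 2)⁻¹ • f x := by
  have hcont : Continuous fun x : ℝ ↦ (1 + x ^ 2)⁻¹ :=
    .inv₀ (by fun_prop) fun x ↦ by positivity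
  have hlog : (fun x : ℝ ↦ log (1 + x ^ 2) ^ m) =O[cocompact ℝ]
      fun x ↦ (1 + x ^ 2) ^ (1 / 4 : ℝ) := by
    have h := isLittleO_log_rpow_rpow_atTop (s := 1 / 4) m (by norm_num)
    simpa only [Function.comp_def, rpow_natCast]
      using (h.comp_tendsto tendsto_one_add_sq_cocompact).isBigO
  have hint : Integrable fun x : ℝ ↦ (1 + ‖x‖ ^ 2) ^ (-(3 / 2) / 2 : ℝ) :=
    integrable_rpow_neg_one_add_norm_sq (by simp; norm_num)
  have hbound : (fun x : ℝ ↦ (1 + x ^ 2)⁻¹ • f x) =O[cocompact ℝ]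
      fun x ↦ (1 + ‖x‖ ^ 2) ^ (-(3 / 2) / 2 : ℝ) := by
    have h := (isBigO_refl (fun x : ℝ ↦ (1 + x ^ 2)⁻¹) (cocompact ℝ)).smul (hO.trans hlog)
    refine h.congr_right fun x ↦ ?_
    rw [norm_eq_abs, sq_abs, smul_eq_mul, ← rpow_neg_one, ← rpow_add (by positivity)]
    norm_num
  exact (hcont.smul hf).locallyIntegrable.integrable_of_isBigO_cocompact hbound
    (hint.integrableAtFilter _)

theorem isBigO_log_add_const_nhdsNE_zero (a : ℂ) :
    (fun u : ℂ ↦ Complex.log u + a) =O[𝓝[≠] 0] fun u ↦ log ‖u‖ := by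
  have hlog : Tendsto (fun u : ℂ ↦ log ‖u‖) (𝓝[≠] 0) atBot :=
    tendsto_log_nhdsGT_zero.comp tendsto_norm_nhdsNE_zero
  have hconst (C : ℂ) : (fun _ : ℂ ↦ C) =O[𝓝[≠] 0] fun u : ℂ ↦ log ‖u‖ :=
    (isLittleO_const_left.2 <| .inr <| tendsto_abs_atBot_atTop.comp hlog).isBigO
  have harg : (fun u : ℂ ↦ (u.arg : ℂ) * Complex.I) =O[𝓝[≠] 0] fun u : ℂ ↦ log ‖u‖ := by
    refine .trans (.of_bound' <| .of_forall fun u ↦ ?_) (hconst π)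
    simpa [abs_of_pos pi_pos] using Complex.abs_arg_le_pi u
  have hre : (fun u : ℂ ↦ (log ‖u‖ : ℂ)) =O[𝓝[≠] 0] fun u : ℂ ↦ log ‖u‖ :=
    .of_bound' <| .of_forall fun u ↦ by simp
  exact (hre.add harg).add (hconst a)

theorem tendsto_mul_log_add_const_pow_nhdsNE_zero (a : ℂ) (m : ℕ) :
    Tendsto (fun u : ℂ ↦ u * (Complex.log u + a) ^ m) (𝓝[≠] 0) (𝓝 0) := by
  have hpow : (fun t : ℝ ↦ log t ^ m) =o[𝓝[>] 0] fun t ↦ t⁻¹ := by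
    have h := isLittleO_abs_log_rpow_rpow_nhdsGT_zero m neg_one_lt_zero
    simp only [rpow_natCast, rpow_neg_one, ← abs_pow] at h
    exact h.of_abs_left
  have hlog : (fun u : ℂ ↦ (Complex.log u + a) ^ m) =o[𝓝[≠] 0] fun u ↦ ‖u‖⁻¹ :=
    ((isBigO_log_add_const_nhdsNE_zero a).pow m).trans_isLittleO
      (hpow.comp_tendsto tendsto_norm_nhdsNE_zero)
  have hmul : (fun u : ℂ ↦ u * (Complex.log u + a) ^ m) =o[𝓝[≠] 0] fun u ↦ ‖u‖ * ‖u‖⁻¹ :=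
    (isBigO_refl (fun u : ℂ ↦ u) _).norm_right.mul_isLittleO hlog
  refine (isLittleO_one_iff ℝ).1 (hmul.congr' .rfl ?_)
  filter_upwards [self_mem_nhdsWithin] with u hu using mul_inv_cancel₀ (norm_ne_zero_iff.2 hu)

end LogGrowth

section Averages

variable (a : ℂ) (m : ℕ)

theorem circleIntegrable_log_one_add_add_const_pow :
    CircleIntegrable (fun z ↦ (Complex.log (1 + z) + a) ^ m) 0 1 := by
  rw [circleIntegrable_iff_integrable_arctan]
  simp_rw [log_one_add_circleMap_two_mul_arctan]
  have hcont : Continuous fun x : ℝ ↦ log (1 + x ^ 2) :=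
    .log (by fun_prop) fun x ↦ by positivity
  refine integrable_inv_one_add_sq_smul_of_isBigO (m := m) (by fun_prop) (.pow ?_ m)
  have htop := tendsto_log_atTop.comp tendsto_one_add_sq_cocompact
  have hconst (C : ℝ) : (fun _ : ℝ ↦ C) =O[cocompact ℝ] fun x ↦ log (1 + x ^ 2) :=
    (isLittleO_const_left.2 <| .inr <| tendsto_abs_atTop_atTop.comp htop).isBigO
  have harctan : (fun x ↦ (arctan x : ℂ) * Complex.I) =O[cocompact ℝ] fun x ↦ log (1 + x ^ 2) := by
    refine .trans (.of_bound' <| .of_forall fun x ↦ ?_) (hconst (π / 2))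
    have h : |arctan x| ≤ π / 2 := abs_le.2
      ⟨(neg_pi_div_two_lt_arctan x).le, (arctan_lt_pi_div_two x).le⟩
    rwa [norm_mul, Complex.norm_I, mul_one, Complex.norm_real, norm_eq_abs, norm_eq_abs,
      abs_of_pos pi_div_two_pos]
  have hlog : (fun x : ℝ ↦ ((log 2 - 1 / 2 * log (1 + x ^ 2) : ℝ) : ℂ)) =O[cocompact ℝ]
      fun x ↦ log (1 + x ^ 2) :=
    Complex.isBigO_ofReal_left.2 ((hconst _).sub ((isBigO_refl _ _).const_mul_left _))
  have ha : (fun _ : ℝ ↦ a) =O[cocompact ℝ] fun x ↦ log (1 + x ^ 2) :=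
    (hconst ‖a‖).of_norm_left
  exact (hlog.add harctan).add ha

theorem diffContOnCl_one_add_mul_log_one_add_add_const_pow :
    DiffContOnCl ℂ (fun z ↦ (1 + z) * (Complex.log (1 + z) + a) ^ m) (ball 0 1) := by
  have hdiff {z : ℂ} (hz : ‖z‖ ≤ 1) (hz' : z ≠ -1) :
      DifferentiableAt ℂ (fun z ↦ (1 + z) * (Complex.log (1 + z) + a) ^ m) z := by
    have hlog : DifferentiableAt ℂ (fun z ↦ Complex.log (1 + z)) z :=
      .clog (by fun_prop) (one_add_mem_slitPlane_of_norm_le_one hz hz')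
    fun_prop
  refine .mk_ball (fun z hz ↦ (hdiff ?_ ?_).differentiableWithinAt)
    fun z hz ↦ ContinuousAt.continuousWithinAt ?_
  · exact (mem_ball_zero_iff.1 hz).le
  · rintro rfl
    simp at hz
  · obtain rfl | hz' := eq_or_ne z (-1)
    · have h0 : ContinuousAt (fun u : ℂ ↦ u * (Complex.log u + a) ^ m) (1 + -1) := by
        rw [continuousAt_iff_punctured_nhds]
        simpa using tendsto_mul_log_add_const_pow_nhdsNE_zero a m
      exact h0.comp (f := fun z ↦ 1 + z) (by fun_prop)
    · exact (hdiff (mem_closedBall_zero_iff.1 hz) hz').continuousAt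

variable {a m} {g : ℂ → ℂ}

theorem circleIntegrable_mul_log_one_add_add_const_pow (hg : ContinuousOn g (sphere 0 1)) :
    CircleIntegrable (fun z ↦ g z * (Complex.log (1 + z) + a) ^ m) 0 1 :=
  (circleIntegrable_log_one_add_add_const_pow a m).fun_continuousOn_mul (by simpa using hg)

theorem circleAverage_mul_log_one_add_add_const_pow (hg : DiffContOnCl ℂ g (ball 0 1)) :
    circleAverage (fun z ↦ g z * (Complex.log (1 + z) + a) ^ m) 0 1 = g 0 * a ^ m := by
  have hw : (-1 : ℂ) ∈ sphere 0 1 := by simp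
  have hprod : DiffContOnCl ℂ
      (fun z ↦ (z - -1) • (g z * (Complex.log (1 + z) + a) ^ m)) (ball 0 1) := by
    convert hg.smul (diffContOnCl_one_add_mul_log_one_add_add_const_pow a m) using 1
    ext z
    simp only [smul_eq_mul]
    ring
  rw [circleAverage_of_diffContOnCl_sub_smul hw hprod
    (circleIntegrable_mul_log_one_add_add_const_pow
      (hg.continuousOn_ball.mono sphere_subset_closedBall)), add_zero, Complex.log_one, zero_add]

end Averages

section CircleMoments

theorem re_mul_re_mul_of_norm_eq_one {z : ℂ} (hz : ‖z‖ = 1) (w : ℂ) :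
    z.re * (z * w).re = ((1 + z ^ 2) * w).re / 2 := by
  have h : z.re * z.re + z.im * z.im = 1 := by
    rw [← Complex.normSq_apply, Complex.normSq_eq_norm_sq, hz, one_pow]
  simp only [Complex.mul_re, Complex.add_re, Complex.add_im, Complex.one_re, Complex.one_im, sq,
    Complex.mul_im]
  linear_combination w.re / 2 * h

theorem re_mul_sq_of_norm_eq_one {z : ℂ} (hz : ‖z‖ = 1) (w : ℂ) :
    (z * w).re ^ 2 = ((1 + z ^ 2) * w ^ 2).re / 2 + w.im ^ 2 := by
  have h : z.re * z.re + z.im * z.im = 1 := by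
    rw [← Complex.normSq_apply, Complex.normSq_eq_norm_sq, hz, one_pow]
  simp only [Complex.mul_re, Complex.add_re, Complex.add_im, Complex.one_re, Complex.one_im, sq,
    Complex.mul_im]
  linear_combination (w.im ^ 2 + w.re ^ 2) / 2 * h

variable (a : ℝ) (m : ℕ)

theorem circleIntegrable_re_one_add_sq_mul_log_one_add_add_const_pow :
    CircleIntegrable (fun z ↦ ((1 + z ^ 2) * (Complex.log (1 + z) + a) ^ m).re) 0 1 := by
  have h : CircleIntegrable (fun z ↦ (1 + z ^ 2) * (Complex.log (1 + z) + a) ^ m) 0 1 :=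
    circleIntegrable_mul_log_one_add_add_const_pow (by fun_prop)
  exact ⟨Complex.reCLM.integrable_comp h.1, Complex.reCLM.integrable_comp h.2⟩

theorem circleAverage_re_one_add_sq_mul_log_one_add_add_const_pow :
    circleAverage (fun z ↦ ((1 + z ^ 2) * (Complex.log (1 + z) + a) ^ m).re) 0 1 = a ^ m := by
  have hg : Differentiable ℂ fun z : ℂ ↦ 1 + z ^ 2 := by fun_prop
  have h := Complex.reCLM.circleAverage_comp_comm (circleIntegrable_mul_log_one_add_add_const_pow
    (a := a) (m := m) hg.continuous.continuousOn)
  rw [circleAverage_mul_log_one_add_add_const_pow hg.diffContOnCl] at h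
  simpa [Function.comp_def, ← Complex.ofReal_pow] using h

theorem im_log_one_add_circleMap_two_mul_arctan_add_const (x : ℝ) :
    (Complex.log (1 + circleMap 0 1 (2 * arctan x)) + a).im = arctan x := by
  rw [log_one_add_circleMap_two_mul_arctan, Complex.add_im, Complex.add_im, Complex.im_ofReal_mul,
    Complex.ofReal_im, Complex.ofReal_im, Complex.I_im, mul_one, zero_add, add_zero]

theorem circleIntegrable_im_log_one_add_add_const_sq :
    CircleIntegrable (fun z ↦ (Complex.log (1 + z) + a).im ^ 2) 0 1 := by
  simp_rw [circleIntegrable_iff_integrable_arctan,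
    im_log_one_add_circleMap_two_mul_arctan_add_const]
  exact integrable_inv_one_add_sq_smul_comp_arctan_iff.2 (intervalIntegral.intervalIntegrable_pow 2)

theorem circleAverage_im_log_one_add_add_const_sq :
    circleAverage (fun z ↦ (Complex.log (1 + z) + a).im ^ 2) 0 1 = π ^ 2 / 12 := by
  simp_rw [circleAverage_eq_integral_arctan, im_log_one_add_circleMap_two_mul_arctan_add_const]
  rw [integral_inv_one_add_sq_smul_comp_arctan fun t ↦ t ^ 2, integral_pow, smul_eq_mul]
  field_simp
  ring

theorem circleAverage_re_mul_re_mul_log_one_add_add_const :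
    circleAverage (fun z ↦ z.re * (z * (Complex.log (1 + z) + a)).re) 0 1 = a / 2 := by
  have h : EqOn (fun z ↦ z.re * (z * (Complex.log (1 + z) + a)).re)
      (fun z ↦ (2⁻¹ : ℝ) • ((1 + z ^ 2) * (Complex.log (1 + z) + a) ^ 1).re) (sphere 0 |1|) := by
    intro z hz
    simp only [re_mul_re_mul_of_norm_eq_one (by simpa using hz), pow_one, smul_eq_mul]
    ring
  rw [circleAverage_congr_sphere h, circleAverage_fun_smul,
    circleAverage_re_one_add_sq_mul_log_one_add_add_const_pow, pow_one, smul_eq_mul,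
    inv_mul_eq_div]

theorem circleAverage_re_mul_log_one_add_add_const_sq :
    circleAverage (fun z ↦ (z * (Complex.log (1 + z) + a)).re ^ 2) 0 1 =
      a ^ 2 / 2 + π ^ 2 / 12 := by
  have h : EqOn (fun z ↦ (z * (Complex.log (1 + z) + a)).re ^ 2)
      (fun z ↦ (2⁻¹ : ℝ) • ((1 + z ^ 2) * (Complex.log (1 + z) + a) ^ 2).re +
        (Complex.log (1 + z) + a).im ^ 2) (sphere 0 |1|) := by
    intro z hz
    simp only [re_mul_sq_of_norm_eq_one (by simpa using hz), smul_eq_mul]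
    ring
  rw [circleAverage_congr_sphere h, circleAverage_fun_add
    ((circleIntegrable_re_one_add_sq_mul_log_one_add_add_const_pow a 2).const_fun_smul)
    (circleIntegrable_im_log_one_add_add_const_sq a), circleAverage_fun_smul,
    circleAverage_re_one_add_sq_mul_log_one_add_add_const_pow,
    circleAverage_im_log_one_add_add_const_sq, smul_eq_mul, inv_mul_eq_div]

theorem re_circleMap_mul_log_one_add_circleMap_add_const (x : ℝ) :
    (circleMap 0 1 (2 * arctan x) *
        (Complex.log (1 + circleMap 0 1 (2 * arctan x)) + a)).re =
      (1 - x ^ 2) / (1 + x ^ 2) * (log 2 - 1 / 2 * log (1 + x ^ 2) + a) -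
        2 * x / (1 + x ^ 2) * arctan x := by
  have hre : (Complex.log (1 + circleMap 0 1 (2 * arctan x)) + a).re =
      log 2 - 1 / 2 * log (1 + x ^ 2) + a := by
    rw [log_one_add_circleMap_two_mul_arctan, Complex.add_re, Complex.add_re,
      Complex.re_ofReal_mul, Complex.ofReal_re, Complex.ofReal_re, Complex.I_re, mul_zero, add_zero]
  rw [Complex.mul_re, hre, im_log_one_add_circleMap_two_mul_arctan_add_const,
    circleMap_two_mul_arctan]

end CircleMoments

/-- Cauchy Fisher information entries `I₂₃ = (1−γ−log 2)/2` and
`I₃₃ = (π²/6 + (γ+log2−1)²)/2` for the symmetric stable model at `α = 1`. -/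
theorem stmt7 (hσ hα : ℝ → ℝ)
    (hhσ : ∀ x, hσ x = (x ^ 2 - 1) / (x ^ 2 + 1))
    (hhα : ∀ x, hα x = ((1 - x ^ 2) / (1 + x ^ 2))
        * ((1 / 2) * Real.log (1 + x ^ 2) - 1 + Real.eulerMascheroniConstant)
      + (2 * x / (1 + x ^ 2)) * Real.arctan x) :
    (∫ x : ℝ, hσ x * hα x * (1 / (π * (1 + x ^ 2))))
        = (1 / 2) * (1 - Real.eulerMascheroniConstant - Real.log 2) ∧
    (∫ x : ℝ, (hα x) ^ 2 * (1 / (π * (1 + x ^ 2))))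
        = (1 / 2) * (π ^ 2 / 6 + (Real.eulerMascheroniConstant + Real.log 2 - 1) ^ 2) := by
  set a := 1 - eulerMascheroniConstant - log 2 with ha
  have hσ_eq x : hσ x = -(circleMap 0 1 (2 * arctan x)).re := by
    rw [hhσ, circleMap_two_mul_arctan, ← neg_div, neg_sub, add_comm]
  have hα_eq x : hα x = -(circleMap 0 1 (2 * arctan x) *
      (Complex.log (1 + circleMap 0 1 (2 * arctan x)) + a)).re := by
    rw [hhα, re_circleMap_mul_log_one_add_circleMap_add_const, ha]
    ring
  constructor
  · simp_rw [hσ_eq, hα_eq, neg_mul_neg]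
    rw [integral_comp_circleMap_mul_cauchy_density
      fun z ↦ z.re * (z * (Complex.log (1 + z) + a)).re,
      circleAverage_re_mul_re_mul_log_one_add_add_const]
    ring
  · simp_rw [hα_eq, neg_sq]
    rw [integral_comp_circleMap_mul_cauchy_density
      fun z ↦ (z * (Complex.log (1 + z) + a)).re ^ 2,
      circleAverage_re_mul_log_one_add_add_const_sq]
    ring
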